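/- Let Q be a finite quiver with positive rank function n and R-charge function R : A → ℝ with 0 < R(a) < 2 for every arrow, satisfying the gauge anomaly condition and the NSVZ condition. Assume: (i) every baryonic charge q satisfies Σ_{a∈A} n_{t(a)} n_{h(a)} (q(h(a)) − q(t(a))) = 0 and Σ_{a∈A} n_{t(a)} n_{h(a)} (R(a)−1)² (q(h(a)) − q(t(a))) = 0; (ii) for every non-constant baryonic charge q, Σ_{a∈A} n_{t(a)} n_{h(a)} (R(a)−1)(q(h(a)) − q(t(a)))² < 0; (iii) the quantity λ := (1/3)(Σ_{v∈V} n_v² + Σ_{a∈A} n_{t(a)} n_{h(a)} (R(a)−1)³) is positive. For s ∈ ℝ define the V×V matrix D_Q(s) by D_Q(s)_{vw} = δ_{vw}(1 − e^{−2s}) − Σ_{a: t(a)=v, h(a)=w} e^{−s R(a)} + Σ_{a: t(a)=w, h(a)=v} e^{−s(2−R(a))}. Then there exists ε > 0 such that D_Q(s) is invertible for all s ∈ (0, ε), and for all vertices v, w, lim_{s→0⁺} s³ · (D_Q(s)⁻¹)_{vw} = n_v n_w / λ = (27/32) · n_v n_w / a, where a = (9/32)(Σ_{v∈V} n_v² +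 Σ_{a∈A} n_{t(a)} n_{h(a)} (R(a)−1)³) is the a-central charge. In particular the leading pole of the Hilbert series of the superconformal quiver gauge theory is governed by the a-central charge, establishing the equivalence of a-maximization and volume minimization. -/

import Mathlib

open Finset Matrix Filter

/-!
The matrix `E s = exp s • D s` has Taylor coefficients `C k` at `s = 0` which are antisymmetric for
even `k` and symmetric for odd `k`. The kernel of `C 0` consists of the vectors `v ↦ n v * q v` with
`q` a baryonic charge; the NSVZ condition is `C 1 *ᵥ n = 0`; on the kernel of `C 0` the form of
`C 1` is `-Tr R B B`, hence definite modulo `n`, and the pairing of `n` with it under `C 2` is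
`-Tr R R B / 2`, hence zero; finally `n ⬝ᵥ C 3 *ᵥ n = λ`.

Suppose `E s *ᵥ u s = s ^ 3 • c s` with `u s → u` and `c s → c`. Multiplying on the left by row
vectors that annihilate `E s` to higher and higher order gives first `C 0 *ᵥ u = 0`, then
`u ⬝ᵥ C 1 *ᵥ u = 0`, hence `u = α • n`, and finally `α * λ = n ⬝ᵥ c`. So `c` determines `u`, and
compactness turns this into convergence of `s ^ 3 • (E s)⁻¹`.
-/

open Topology

namespace QuiverHilbert

section TendstoMatrix

variable {ι R V : Type*} [Fintype V] [NonUnitalNonAssocSemiring R] [TopologicalSpace R]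
  [ContinuousAdd R] [ContinuousMul R] {l : Filter ι}

theorem tendsto_dotProduct {f g : ι → V → R} {a b : V → R} (hf : Tendsto f l (𝓝 a))
    (hg : Tendsto g l (𝓝 b)) : Tendsto (fun i => f i ⬝ᵥ g i) l (𝓝 (a ⬝ᵥ b)) :=
  ((continuous_fst.dotProduct continuous_snd).tendsto (a, b)).comp (hf.prodMk_nhds hg)

theorem tendsto_vecMul {f : ι → V → R} {M : ι → Matrix V V R} {a : V → R} {B : Matrix V V R}
    (hf : Tendsto f l (𝓝 a)) (hM : Tendsto M l (𝓝 B)) :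
    Tendsto (fun i => f i ᵥ* M i) l (𝓝 (a ᵥ* B)) :=
  ((continuous_fst.matrix_vecMul continuous_snd).tendsto (a, B)).comp (hf.prodMk_nhds hM)

end TendstoMatrix

theorem dotProduct_eq_of_tendsto {ι R V : Type*} [Fintype V] [NonUnitalSemiring R]
    [TopologicalSpace R] [ContinuousAdd R] [ContinuousMul R] [T2Space R] {l : Filter ι} [l.NeBot]
    {M : ι → Matrix V V R} {ρ u : ι → V → R} {ρ₀ σ₀ u₀ c₀ : V → R}
    (hρ : Tendsto ρ l (𝓝 ρ₀)) (hρM : Tendsto (fun i => ρ i ᵥ* M i) l (𝓝 σ₀))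
    (hu : Tendsto u l (𝓝 u₀)) (hMu : Tendsto (fun i => M i *ᵥ u i) l (𝓝 c₀)) :
    σ₀ ⬝ᵥ u₀ = ρ₀ ⬝ᵥ c₀ :=
  tendsto_nhds_unique
    ((tendsto_dotProduct hρM hu).congr fun _ => (dotProduct_mulVec _ _ _).symm)
    (tendsto_dotProduct hρ hMu)

theorem exists_vecMul_eq_of_forall_dotProduct_eq_zero {K m n : Type*} [Field K] [Fintype m]
    [Fintype n] {M : Matrix m n K} {b : n → K} (hb : ∀ p, M *ᵥ p = 0 → b ⬝ᵥ p = 0) :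
    ∃ y, y ᵥ* M = b := by
  classical
  have hmem : dotProductEquiv K n b ∈ LinearMap.range M.mulVecLin.dualMap := by
    rw [LinearMap.range_dualMap_eq_dualAnnihilator_ker, Submodule.mem_dualAnnihilator]
    exact fun p hp => hb p hp
  obtain ⟨φ, hφ⟩ := hmem
  obtain ⟨y, rfl⟩ := (dotProductEquiv K m).surjective φ
  refine ⟨y, dotProduct_eq _ _ fun p => ?_⟩
  rw [← dotProduct_mulVec]
  exact LinearMap.congr_fun hφ p

theorem norm_inv_one_add_norm_smul {𝕜 F : Type*} [RCLike 𝕜] [SeminormedAddCommGroup F]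
    [NormedSpace 𝕜 F] (x : F) :
    ‖(((1 + ‖x‖)⁻¹ : ℝ) : 𝕜) • x‖ = 1 - (1 + ‖x‖)⁻¹ := by
  have hpos : 0 < 1 + ‖x‖ := by positivity
  rw [norm_smul, RCLike.norm_of_nonneg (inv_nonneg.2 hpos.le)]
  field_simp
  ring

section InverseGraphLimit

variable {ι 𝕜 V : Type*} [RCLike 𝕜] [Fintype V]

/-- The graphs of the matrices `M i` accumulate along `l` only at points `(T c, c)`. This says that
the inverses of the `M i` converge to `T` without presupposing that the `M i` are invertible.
Accumulation is tested along ultrafilters, so that compactness produces limits without passing to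
subsequences. -/
def HasInverseGraphLimit (l : Filter ι) (M : ι → Matrix V V 𝕜) (T : Matrix V V 𝕜) : Prop :=
  ∀ ⦃U : Ultrafilter ι⦄ ⦃u : ι → V → 𝕜⦄ ⦃u₀ c₀ : V → 𝕜⦄, ↑U ≤ l → Tendsto u U (𝓝 u₀) →
    Tendsto (fun i => M i *ᵥ u i) U (𝓝 c₀) → u₀ = T *ᵥ c₀

namespace HasInverseGraphLimit

variable {l : Filter ι} {M : ι → Matrix V V 𝕜} {T : Matrix V V 𝕜}

theorem smul (hM : HasInverseGraphLimit l M T) {a : ι → 𝕜} {a₀ : 𝕜} (ha : Tendsto a l (𝓝 a₀))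
    (ha₀ : a₀ ≠ 0) : HasInverseGraphLimit l (fun i => a i • M i) (a₀⁻¹ • T) := by
  intro U u u₀ c₀ hU hu hMu
  rw [smul_mulVec, ← mulVec_smul]
  refine hM hU hu ((((ha.mono_left hU).inv₀ ha₀).smul hMu).congr' ?_)
  filter_upwards [hU (ha.eventually_ne ha₀)] with i hi
  rw [smul_mulVec, inv_smul_smul₀ hi]

variable [DecidableEq V]

theorem eventually_isUnit (hM : HasInverseGraphLimit l M T) : ∀ᶠ i in l, IsUnit (M i) := by
  by_contra hsing
  obtain ⟨U, hU⟩ := @Ultrafilter.exists_le _ _ (frequently_iff_neBot.1 (not_eventually.1 hsing))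
  have hkernel : ∀ᶠ i in (U : Filter ι), ∃ u : V → 𝕜, ‖u‖ = 1 ∧ M i *ᵥ u = 0 := by
    filter_upwards [le_principal_iff.1 (hU.trans inf_le_right)] with i hi
    rw [isUnit_iff_isUnit_det, isUnit_iff_ne_zero, not_not,
      ← exists_mulVec_eq_zero_iff] at hi
    obtain ⟨x, hx, hMx⟩ := hi
    exact ⟨(‖x‖ : 𝕜)⁻¹ • x, norm_smul_inv_norm hx, by rw [mulVec_smul, hMx, smul_zero]⟩
  obtain ⟨u, hu⟩ := hkernel.choice
  obtain ⟨u₀, hu₀, hlim⟩ := (isCompact_sphere (0 : V → 𝕜) 1).ultrafilter_le_nhds (U.map u)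
    (tendsto_principal.2 (hu.mono fun i hi => mem_sphere_zero_iff_norm.2 hi.1))
  have hzero : u₀ = T *ᵥ 0 := hM (hU.trans inf_le_left) hlim
    (tendsto_const_nhds.congr' (hu.mono fun i hi => hi.2.symm))
  rw [mem_sphere_zero_iff_norm, hzero, mulVec_zero, norm_zero] at hu₀
  exact zero_ne_one hu₀

theorem tendsto_inv_mulVec (hM : HasInverseGraphLimit l M T) (b : V → 𝕜) :
    Tendsto (fun i => (M i)⁻¹ *ᵥ b) l (𝓝 (T *ᵥ b)) := by
  rw [tendsto_iff_ultrafilter]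
  intro U hU
  -- Rescaling by `γ` keeps the solutions `x` bounded; a limit `γ₀ = 0` would mean `x → ∞`, but then
  -- the rescaled solutions would tend to a unit vector in the image of `0`.
  set x : ι → V → 𝕜 := fun i => (M i)⁻¹ *ᵥ b with hx
  set γ : ι → ℝ := fun i => (1 + ‖x i‖)⁻¹
  have hpos (i : ι) : 0 < 1 + ‖x i‖ := by positivity
  have hγ_mem (i : ι) : γ i ∈ Set.Icc (0 : ℝ) 1 :=
    ⟨inv_nonneg.2 (hpos i).le, inv_le_one_of_one_le₀ (by linarith [norm_nonneg (x i)])⟩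
  have hnorm (i : ι) : ‖(γ i : 𝕜) • x i‖ = 1 - γ i := norm_inv_one_add_norm_smul (x i)
  obtain ⟨γ₀, -, hγ₀ : Tendsto γ U (𝓝 γ₀)⟩ := isCompact_Icc.ultrafilter_le_nhds (U.map γ)
    (tendsto_principal.2 (Eventually.of_forall hγ_mem))
  obtain ⟨u₀, -, hu₀ : Tendsto (fun i => (γ i : 𝕜) • x i) U (𝓝 u₀)⟩ :=
    (isCompact_closedBall (0 : V → 𝕜) 1).ultrafilter_le_nhds (U.map fun i => (γ i : 𝕜) • x i)
      (tendsto_principal.2 (Eventually.of_forall fun i => by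
        rw [mem_closedBall_zero_iff, hnorm]
        linarith [(hγ_mem i).1]))
  have hγ₀' : Tendsto (fun i => (γ i : 𝕜)) U (𝓝 γ₀) :=
    (RCLike.continuous_ofReal.tendsto γ₀).comp hγ₀
  have hlimit : u₀ = (γ₀ : 𝕜) • T *ᵥ b := by
    rw [← mulVec_smul]
    refine hM hU hu₀ ((hγ₀'.smul_const b).congr' ?_)
    filter_upwards [hU hM.eventually_isUnit] with i hi
    rw [hx, mulVec_smul, mulVec_mulVec, mul_nonsing_inv _ ((isUnit_iff_isUnit_det _).1 hi),
      one_mulVec]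
  have hne : γ₀ ≠ 0 := by
    rintro rfl
    have hone : ‖u₀‖ = 1 - 0 :=
      tendsto_nhds_unique hu₀.norm ((tendsto_const_nhds.sub hγ₀).congr fun i => (hnorm i).symm)
    simp [hlimit] at hone
  have hne' : (γ₀ : 𝕜) ≠ 0 := RCLike.ofReal_ne_zero.2 hne
  have hlim := (hγ₀'.inv₀ hne').smul hu₀
  rw [hlimit, inv_smul_smul₀ hne'] at hlim
  exact hlim.congr fun i =>
    inv_smul_smul₀ (RCLike.ofReal_ne_zero.2 (inv_ne_zero (hpos i).ne')) _

theorem tendsto_inv_apply (hM : HasInverseGraphLimit l M T) (v w : V) :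
    Tendsto (fun i => (M i)⁻¹ v w) l (𝓝 (T v w)) := by
  simpa only [mulVec_single_one, col_apply] using
    tendsto_pi_nhds.1 (hM.tendsto_inv_mulVec (Pi.single w 1)) v

theorem eventually_isUnit_of_inv_smul {a : ι → 𝕜} (ha : ∀ᶠ i in l, a i ≠ 0)
    (hM : HasInverseGraphLimit l (fun i => (a i)⁻¹ • M i) T) : ∀ᶠ i in l, IsUnit (M i) := by
  filter_upwards [ha, hM.eventually_isUnit] with i hai hi
  exact (isUnit_smul_iff (Units.mk0 _ (inv_ne_zero hai)) (M i)).1 hi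

theorem tendsto_mul_inv_apply {a : ι → 𝕜} (ha : ∀ᶠ i in l, a i ≠ 0)
    (hM : HasInverseGraphLimit l (fun i => (a i)⁻¹ • M i) T) (v w : V) :
    Tendsto (fun i => a i * (M i)⁻¹ v w) l (𝓝 (T v w)) := by
  refine (hM.tendsto_inv_apply v w).congr' ?_
  filter_upwards [ha, hM.eventually_isUnit_of_inv_smul ha] with i hai hi
  have hinv : ((a i)⁻¹ • M i)⁻¹ = a i • (M i)⁻¹ := inv_eq_right_inv <| by
    rw [smul_mul_smul_comm, inv_mul_cancel₀ hai, one_smul,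
      mul_nonsing_inv _ ((isUnit_iff_isUnit_det _).1 hi)]
  rw [hinv, Matrix.smul_apply, smul_eq_mul]

end HasInverseGraphLimit

end InverseGraphLimit

section Expansion

variable {𝕜 F G : Type*} [NormedField 𝕜] [AddCommGroup F] [Module 𝕜 F] [TopologicalSpace F]
  [AddCommGroup G] [Module 𝕜 G] [TopologicalSpace G]

/-- The asymptotic expansion `f s = ∑ k ≤ n, s ^ k • c k + o(s ^ n)` as `s → 0`, `s ≠ 0`. Only the
coefficients `c 0, …, c n` matter. -/
def HasExpansion (n : ℕ) (f : 𝕜 → F) (c : ℕ → F) : Prop :=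
  Tendsto (fun s => (s ^ n)⁻¹ • (f s - ∑ k ∈ range n, s ^ k • c k)) (𝓝[≠] 0) (𝓝 (c n))

namespace HasExpansion

variable {n : ℕ} {f g : 𝕜 → F} {c d : ℕ → F}

theorem map (hf : HasExpansion n f c) (L : F →ₗ[𝕜] G) (hL : Continuous L) :
    HasExpansion n (fun s => L (f s)) (fun k => L (c k)) := by
  refine ((hL.tendsto _).comp hf).congr fun s => ?_
  simp only [Function.comp_apply, map_smul, map_sub, map_sum]

variable [IsTopologicalAddGroup F]

theorem add (hf : HasExpansion n f c) (hg : HasExpansion n g d) :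
    HasExpansion n (f + g) (c + d) := by
  refine (Tendsto.add hf hg).congr fun s => ?_
  simp only [Pi.add_apply, smul_add, smul_sub, sum_add_distrib]
  abel

theorem sub (hf : HasExpansion n f c) (hg : HasExpansion n g d) :
    HasExpansion n (f - g) (c - d) := by
  refine (Tendsto.sub hf hg).congr fun s => ?_
  simp only [Pi.sub_apply, smul_sub, sum_sub_distrib]
  abel

theorem of_le [ContinuousSMul 𝕜 F] {m : ℕ} (hf : HasExpansion n f c) (hmn : m ≤ n) :
    HasExpansion m f c := by
  induction hmn using Nat.decreasingInduction with
  | self => exact hf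
  | of_succ k _ ih =>
    have hs : Tendsto (fun s : 𝕜 => s) (𝓝[≠] 0) (𝓝 0) := nhdsWithin_le_nhds
    have hlim := (hs.smul ih).add_const (c k)
    rw [zero_smul, zero_add] at hlim
    refine hlim.congr' ?_
    filter_upwards [eventually_mem_nhdsWithin] with s (hs0 : s ≠ 0)
    have hpow : s * (s ^ (k + 1))⁻¹ = (s ^ k)⁻¹ := by rw [pow_succ']; field_simp
    rw [sum_range_succ, smul_smul, hpow, ← sub_sub, smul_sub _ (f s - _),
      inv_smul_smul₀ (pow_ne_zero k hs0), sub_add_cancel]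

end HasExpansion

theorem hasExpansion_pi {ι : Type*} {n : ℕ} {f : 𝕜 → ι → F} {c : ℕ → ι → F}
    (hf : ∀ i, HasExpansion n (fun s => f s i) (fun k => c k i)) : HasExpansion n f c :=
  tendsto_pi_nhds.2 fun i => (hf i).congr fun s => by
    simp only [Pi.smul_apply, Pi.sub_apply, Finset.sum_apply]

theorem hasExpansion_exp (n : ℕ) (x : ℝ) :
    HasExpansion n (fun s : ℝ => Real.exp (s * x)) (fun k => (k.factorial : ℝ)⁻¹ * x ^ k) := by
  have hlim : Tendsto (fun s : ℝ => s * x) (𝓝[≠] 0) (𝓝 0) := by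
    simpa using (tendsto_id.mul_const x).mono_left (nhdsWithin_le_nhds (a := (0 : ℝ)) (s := {0}ᶜ))
  have hO : ((fun y : ℝ => y ^ n) ∘ fun s : ℝ => s * x) =O[𝓝[≠] 0] fun s : ℝ => s ^ n :=
    (Asymptotics.isBigO_const_mul_self (x ^ n) (fun s : ℝ => s ^ n) _).congr_left fun s => by
      simp only [Function.comp_apply]
      ring
  have hremainder := (((Real.exp_sub_sum_range_succ_isLittleO_pow n).comp_tendsto hlim).trans_isBigO
    hO).tendsto_div_nhds_zero.add_const ((n.factorial : ℝ)⁻¹ * x ^ n)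
  rw [zero_add] at hremainder
  refine hremainder.congr' ?_
  filter_upwards [eventually_mem_nhdsWithin] with s (hs : s ≠ 0)
  have hterm (k : ℕ) : (s * x) ^ k / (k.factorial : ℝ) = s ^ k * ((k.factorial : ℝ)⁻¹ * x ^ k) := by
    rw [mul_pow, div_eq_mul_inv]
    ring
  simp only [Function.comp_apply, sum_range_succ, hterm, smul_eq_mul]
  field_simp
  ring

end Expansion

section CubicDegeneration

variable {𝕜 V : Type*} [Fintype V]

/-- Conditions on the coefficients of `E s = C 0 + s C 1 + s² C 2 + s³ C 3 + ⋯` under which `E`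
degenerates exactly to third order along the line spanned by `N`: the kernel of `C 0` is also its
left kernel, on it `C 1` is anisotropic modulo `N` and `C 2` does not couple to `N`, while `C 3`
is nonzero on `N`. -/
structure IsCubicDegeneration [Field 𝕜] (C : ℕ → Matrix V V 𝕜) (N : V → 𝕜) : Prop where
  vecMul_zero : ∀ p, C 0 *ᵥ p = 0 → p ᵥ* C 0 = 0
  zero_mulVec : C 0 *ᵥ N = 0
  vecMul_one : N ᵥ* C 1 = 0
  one_mulVec : C 1 *ᵥ N = 0
  mem_span : ∀ p, C 0 *ᵥ p = 0 → p ⬝ᵥ C 1 *ᵥ p = 0 → ∃ α : 𝕜, α • N = p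
  dotProduct_two : ∀ p, C 0 *ᵥ p = 0 → N ⬝ᵥ C 2 *ᵥ p = 0
  dotProduct_three : N ⬝ᵥ C 3 *ᵥ N ≠ 0

section NormedField

variable [NormedField 𝕜] {E : 𝕜 → Matrix V V 𝕜} {C : ℕ → Matrix V V 𝕜}

theorem HasExpansion.tendsto_pow_smul_vecMul {n k : ℕ} (hE : HasExpansion n E C) (hk : k ≤ n)
    {p : V → 𝕜} (hp : ∀ j < k, p ᵥ* C j = 0) :
    Tendsto (fun s => (s ^ (n - k) • p) ᵥ* ((s ^ n)⁻¹ • E s)) (𝓝[≠] 0) (𝓝 (p ᵥ* C k)) := by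
  refine (tendsto_vecMul tendsto_const_nhds (hE.of_le hk)).congr' ?_
  filter_upwards [eventually_mem_nhdsWithin] with s (hs : s ≠ 0)
  have hsum : p ᵥ* ∑ j ∈ range k, s ^ j • C j = 0 := by
    rw [vecMul_sum]
    exact sum_eq_zero fun j hj => by rw [vecMul_smul, hp j (mem_range.1 hj), smul_zero]
  have hpow : s ^ (n - k) * (s ^ n)⁻¹ = (s ^ k)⁻¹ := by
    rw [← pow_sub_mul_pow s hk]
    field_simp
  rw [vecMul_smul, vecMul_sub, hsum, sub_zero, smul_vecMul, vecMul_smul, smul_smul, hpow]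

/-- The correction `s² y` cancels the second-order term of `N ᵥ* E s`. -/
theorem HasExpansion.tendsto_corrected_vecMul (hE : HasExpansion 3 E C) {N y : V → 𝕜}
    (hN₀ : N ᵥ* C 0 = 0) (hN₁ : N ᵥ* C 1 = 0) (hy : y ᵥ* C 0 = -(N ᵥ* C 2)) :
    Tendsto (fun s => (N + s ^ 2 • y) ᵥ* ((s ^ 3)⁻¹ • E s)) (𝓝[≠] 0)
      (𝓝 (N ᵥ* C 3 + y ᵥ* C 1)) := by
  refine ((tendsto_vecMul tendsto_const_nhds hE).add
    (tendsto_vecMul tendsto_const_nhds (hE.of_le (show 1 ≤ 3 by norm_num)))).congr' ?_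
  filter_upwards [eventually_mem_nhdsWithin] with s (hs : s ≠ 0)
  simp only [sum_range_succ, sum_range_zero, pow_zero, pow_one, zero_add, one_smul, add_vecMul,
    vecMul_smul, smul_vecMul, vecMul_sub, vecMul_add, hN₀, hN₁, hy, smul_zero]
  match_scalars <;> field_simp
  ring

end NormedField

theorem IsCubicDegeneration.hasInverseGraphLimit [RCLike 𝕜] {E : 𝕜 → Matrix V V 𝕜}
    {C : ℕ → Matrix V V 𝕜} {N : V → 𝕜} (hC : IsCubicDegeneration C N) (hE : HasExpansion 3 E C) :
    HasInverseGraphLimit (𝓝[≠] 0) (fun s => (s ^ 3)⁻¹ • E s)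
      ((N ⬝ᵥ C 3 *ᵥ N)⁻¹ • vecMulVec N N) := by
  intro U u u₀ c₀ hU hu hEu
  have hs : Tendsto (fun s : 𝕜 => s) U (𝓝 0) := hU.trans nhdsWithin_le_nhds
  have hpow (k : ℕ) (hk : k ≠ 0) (p : V → 𝕜) : Tendsto (fun s : 𝕜 => s ^ k • p) U (𝓝 0) := by
    simpa [hk] using (hs.pow k).smul_const p
  have hker : C 0 *ᵥ u₀ = 0 := by
    refine dotProduct_eq_zero _ fun p => ?_
    rw [dotProduct_comm, dotProduct_mulVec]
    simpa using dotProduct_eq_of_tendsto (hpow 3 three_ne_zero p)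
      ((hE.tendsto_pow_smul_vecMul (Nat.zero_le 3) (by simp)).mono_left hU) hu hEu
  have hisotropic : u₀ ⬝ᵥ C 1 *ᵥ u₀ = 0 := by
    rw [dotProduct_mulVec]
    simpa using dotProduct_eq_of_tendsto (hpow 2 two_ne_zero u₀)
      ((hE.tendsto_pow_smul_vecMul (show 1 ≤ 3 by norm_num)
        (by simpa using hC.vecMul_zero u₀ hker)).mono_left hU) hu hEu
  obtain ⟨α, rfl⟩ := hC.mem_span u₀ hker hisotropic
  obtain ⟨y, hy⟩ : ∃ y, y ᵥ* C 0 = -(N ᵥ* C 2) :=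
    exists_vecMul_eq_of_forall_dotProduct_eq_zero fun p hp => by
      rw [neg_dotProduct, ← dotProduct_mulVec, hC.dotProduct_two p hp, neg_zero]
  have hρ : Tendsto (fun s : 𝕜 => N + s ^ 2 • y) U (𝓝 N) := by
    simpa using (hpow 2 two_ne_zero y).const_add N
  have hα : α * (N ⬝ᵥ C 3 *ᵥ N) = N ⬝ᵥ c₀ := by
    rw [← dotProduct_eq_of_tendsto hρ ((hE.tendsto_corrected_vecMul
      (hC.vecMul_zero N hC.zero_mulVec) hC.vecMul_one hy).mono_left hU) hu hEu]
    simp only [add_dotProduct, ← dotProduct_mulVec, dotProduct_smul, hC.one_mulVec,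
      dotProduct_zero, add_zero, smul_eq_mul]
  rw [smul_mulVec, vecMulVec_mulVec, op_smul_eq_smul, ← hα, mul_comm, mul_smul,
    inv_smul_smul₀ hC.dotProduct_three]

end CubicDegeneration

section WeightMatrix

variable {K V A : Type*} [CommSemiring K] [Fintype A] [DecidableEq V]

/-- The matrix whose `(v, w)` entry is the total weight of the arrows from `v` to `w`, as a linear
function of the weights of the arrows. -/
def weightMatrix (t h : A → V) : (A → K) →ₗ[K] Matrix V V K :=
  ∑ a, singleLinearMap K (t a) (h a) ∘ₗ LinearMap.proj a

theorem weightMatrix_apply (t h : A → V) (f : A → K) (v w : V) :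
    weightMatrix t h f v w = ∑ a, if t a = v ∧ h a = w then f a else 0 := by
  simp [weightMatrix, Matrix.sum_apply, single_apply]

theorem weightMatrix_transpose (t h : A → V) (f : A → K) :
    (weightMatrix t h f)ᵀ = weightMatrix h t f := by
  ext v w
  simp only [transpose_apply, weightMatrix_apply, and_comm]

theorem weightMatrix_mulVec_apply [Fintype V] (t h : A → V) (f : A → K) (x : V → K) (v : V) :
    (weightMatrix t h f *ᵥ x) v = ∑ a, if t a = v then f a * x (h a) else 0 := by
  simp only [mulVec, dotProduct, weightMatrix_apply, sum_mul]
  rw [sum_comm]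
  refine sum_congr rfl fun a _ => ?_
  by_cases ha : t a = v <;> simp [ha]

theorem dotProduct_weightMatrix_mulVec [Fintype V] (t h : A → V) (f : A → K) (x y : V → K) :
    x ⬝ᵥ weightMatrix t h f *ᵥ y = ∑ a, f a * x (t a) * y (h a) := by
  simp only [dotProduct, weightMatrix_mulVec_apply, mul_sum, mul_ite, mul_zero]
  rw [sum_comm]
  exact sum_congr rfl fun a _ => by rw [sum_ite_eq, if_pos (mem_univ _)]; ring

end WeightMatrix

section Quiver

variable {K V A : Type*} [Field K] [Fintype A] [DecidableEq V]

/-- `q` is a baryonic charge of the quiver with tails `t`, heads `h` and ranks `n`. Gauge anomaly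
cancellation says that the constant `1` is one. -/
def IsBaryonicCharge (t h : A → V) (n q : V → K) : Prop :=
  ∀ v, ∑ a, (if h a = v then n (t a) * q (t a) else 0)
    = ∑ a, if t a = v then n (h a) * q (h a) else 0

/-- The coefficient of `s ^ k` in the expansion of `symmDenominator t h r` at `s = 0`. -/
def denominatorCoeff (t h : A → V) (r : A → K) (k : ℕ) : Matrix V V K :=
  (k.factorial : K)⁻¹ •
    ((1 - (-1) ^ k : K) • 1 + weightMatrix h t (r ^ k) - weightMatrix t h ((-r) ^ k))

variable (t h : A → V) (r : A → K) (n q : V → K)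

theorem denominatorCoeff_transpose (k : ℕ) :
    (denominatorCoeff t h r k)ᵀ = (-1) ^ (k + 1) • denominatorCoeff t h r k := by
  rcases k.even_or_odd with hk | hk
  · simp [denominatorCoeff, weightMatrix_transpose, hk.neg_pow, pow_succ, ← smul_neg]
  · simp [denominatorCoeff, weightMatrix_transpose, hk.neg_pow, pow_succ, add_right_comm]

variable [Fintype V]

theorem vecMul_denominatorCoeff (k : ℕ) (x : V → K) :
    x ᵥ* denominatorCoeff t h r k = (-1) ^ (k + 1) • denominatorCoeff t h r k *ᵥ x := by
  rw [← mulVec_transpose, denominatorCoeff_transpose, smul_mulVec]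

theorem denominatorCoeff_mulVec_apply (k : ℕ) (x : V → K) (v : V) :
    (denominatorCoeff t h r k *ᵥ x) v = (k.factorial : K)⁻¹ * ((1 - (-1) ^ k) * x v
      + (∑ a, if h a = v then r a ^ k * x (t a) else 0)
      - ∑ a, if t a = v then (-r a) ^ k * x (h a) else 0) := by
  simp [denominatorCoeff, smul_mulVec, add_mulVec, sub_mulVec, weightMatrix_mulVec_apply]

theorem dotProduct_denominatorCoeff_mulVec (k : ℕ) (x y : V → K) :
    x ⬝ᵥ denominatorCoeff t h r k *ᵥ y = (k.factorial : K)⁻¹ * ((1 - (-1) ^ k) * (x ⬝ᵥ y)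
      + ∑ a, (r a ^ k * x (h a) * y (t a) - (-r a) ^ k * x (t a) * y (h a))) := by
  simp only [denominatorCoeff, smul_mulVec, add_mulVec, sub_mulVec, one_mulVec, dotProduct_smul,
    dotProduct_add, dotProduct_sub, dotProduct_weightMatrix_mulVec, smul_eq_mul, Pi.pow_apply,
    Pi.neg_apply, sum_sub_distrib, add_sub_assoc]

theorem denominatorCoeff_zero_mulVec_eq_zero_iff :
    denominatorCoeff t h r 0 *ᵥ (n * q) = 0 ↔ IsBaryonicCharge t h n q := by
  simp [funext_iff, denominatorCoeff_mulVec_apply, IsBaryonicCharge, sub_eq_zero]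

theorem denominatorCoeff_one_mulVec_eq_zero_iff :
    denominatorCoeff t h r 1 *ᵥ n = 0 ↔ ∀ v, 2 * n v + (∑ a, if t a = v then r a * n (h a) else 0)
      + (∑ a, if h a = v then r a * n (t a) else 0) = 0 := by
  have hodd : (1 - -1 : K) = 2 := by norm_num
  refine funext_iff.trans (forall_congr' fun v => ?_)
  have hneg : ∑ a, (if t a = v then -r a * n (h a) else 0)
      = -∑ a, if t a = v then r a * n (h a) else 0 := by
    rw [← sum_neg_distrib]
    exact sum_congr rfl fun a _ => by split_ifs <;> simp
  rw [denominatorCoeff_mulVec_apply]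
  simp only [Nat.factorial_one, Nat.cast_one, inv_one, one_mul, pow_one, hodd, hneg,
    sub_neg_eq_add, Pi.zero_apply, add_right_comm]

theorem dotProduct_denominatorCoeff_one_mulVec (hn : denominatorCoeff t h r 1 *ᵥ n = 0) :
    (n * q) ⬝ᵥ denominatorCoeff t h r 1 *ᵥ (n * q)
      = -∑ a, n (t a) * n (h a) * r a * (q (h a) - q (t a)) ^ 2 := by
  have hsq : (n * q ^ 2) ⬝ᵥ denominatorCoeff t h r 1 *ᵥ n = 0 := by rw [hn, dotProduct_zero]
  have hdiag : (n * q ^ 2) ⬝ᵥ n = (n * q) ⬝ᵥ (n * q) :=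
    sum_congr rfl fun v _ => by simp only [Pi.mul_apply, Pi.pow_apply]; ring
  rw [← sub_zero (_ ⬝ᵥ _), ← hsq]
  simp only [dotProduct_denominatorCoeff_mulVec, hdiag, add_sub_add_left_eq_sub,
    ← sum_sub_distrib, ← sum_neg_distrib, Nat.factorial_one, Nat.cast_one, inv_one, one_mul]
  exact sum_congr rfl fun a _ => by simp only [Pi.mul_apply, Pi.pow_apply]; ring

theorem dotProduct_denominatorCoeff_two_mulVec :
    n ⬝ᵥ denominatorCoeff t h r 2 *ᵥ (n * q)
      = -(2 : K)⁻¹ * ∑ a, n (t a) * n (h a) * r a ^ 2 * (q (h a) - q (t a)) := by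
  rw [dotProduct_denominatorCoeff_mulVec, even_two.neg_one_pow, sub_self, zero_mul, zero_add,
    neg_mul, ← mul_neg, ← sum_neg_distrib, Nat.factorial_two, Nat.cast_two]
  congr 1
  exact sum_congr rfl fun a _ => by simp only [Pi.mul_apply]; ring

theorem dotProduct_denominatorCoeff_three_mulVec [CharZero K] :
    n ⬝ᵥ denominatorCoeff t h r 3 *ᵥ n
      = 1 / 3 * ((∑ v, n v ^ 2) + ∑ a, n (t a) * n (h a) * r a ^ 3) := by
  rw [dotProduct_denominatorCoeff_mulVec]
  have hsum : ∑ a, (r a ^ 3 * n (h a) * n (t a) - (-r a) ^ 3 * n (t a) * n (h a))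
      = 2 * ∑ a, n (t a) * n (h a) * r a ^ 3 := by
    rw [mul_sum]
    exact sum_congr rfl fun a _ => by ring
  have hdot : n ⬝ᵥ n = ∑ v, n v ^ 2 := sum_congr rfl fun v _ => (sq (n v)).symm
  have hsix : ((3).factorial : K) = 6 := by norm_num [Nat.factorial]
  rw [hsum, hdot, hsix]
  field_simp
  ring

variable {t h r n}

theorem isCubicDegeneration_denominatorCoeff [CharZero K] (hn : ∀ v, n v ≠ 0)
    (anom : ∀ v, ∑ a, (if h a = v then n (t a) else 0) = ∑ a, if t a = v then n (h a) else 0)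
    (nsvz : ∀ v, 2 * n v + (∑ a, if t a = v then r a * n (h a) else 0)
      + (∑ a, if h a = v then r a * n (t a) else 0) = 0)
    (hTrRRB : ∀ q, IsBaryonicCharge t h n q →
      ∑ a, n (t a) * n (h a) * r a ^ 2 * (q (h a) - q (t a)) = 0)
    (hTrRBB : ∀ q, IsBaryonicCharge t h n q → (¬ ∀ v w : V, q v = q w) →
      ∑ a, n (t a) * n (h a) * r a * (q (h a) - q (t a)) ^ 2 ≠ 0)
    (hcubic : 1 / 3 * ((∑ v, n v ^ 2) + ∑ a, n (t a) * n (h a) * r a ^ 3) ≠ 0) :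
    IsCubicDegeneration (denominatorCoeff t h r) n := by
  have hfirst := (denominatorCoeff_one_mulVec_eq_zero_iff t h r n).2 nsvz
  have hcharge (p : V → K) : n * (p / n) = p := funext fun v => mul_div_cancel₀ (p v) (hn v)
  have hbaryonic (p : V → K) (hp : denominatorCoeff t h r 0 *ᵥ p = 0) :
      IsBaryonicCharge t h n (p / n) := by
    rwa [← denominatorCoeff_zero_mulVec_eq_zero_iff t h r, hcharge]
  refine
    { vecMul_zero := fun p hp => by rw [vecMul_denominatorCoeff, hp, smul_zero]
      zero_mulVec := ?_
      vecMul_one := by rw [vecMul_denominatorCoeff, hfirst, smul_zero]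
      one_mulVec := hfirst
      mem_span := fun p hp hisotropic => ?_
      dotProduct_two := fun p hp => ?_
      dotProduct_three := by rwa [dotProduct_denominatorCoeff_three_mulVec] }
  · rw [← mul_one n, denominatorCoeff_zero_mulVec_eq_zero_iff]
    simpa [IsBaryonicCharge] using anom
  · have hconst : ∀ v w, (p / n) v = (p / n) w := by
      by_contra hnonconst
      rw [← hcharge p, dotProduct_denominatorCoeff_one_mulVec t h r n _ hfirst] at hisotropic
      exact hTrRBB _ (hbaryonic p hp) hnonconst (neg_eq_zero.1 hisotropic)
    rcases isEmpty_or_nonempty V with _ | ⟨⟨v₀⟩⟩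
    · exact ⟨0, Subsingleton.elim _ _⟩
    · refine ⟨(p / n) v₀, funext fun v => ?_⟩
      rw [Pi.smul_apply, hconst v₀ v, smul_eq_mul, Pi.div_apply, div_mul_cancel₀ _ (hn v)]
  · rw [← hcharge p, dotProduct_denominatorCoeff_two_mulVec, hTrRRB _ (hbaryonic p hp), mul_zero]

end Quiver

section Denominator

variable {V A : Type*} [Fintype A] [DecidableEq V] (t h : A → V)

/-- `exp s` times the denominator matrix of the Hilbert series at `exp (-s)`, for the R-charges
`r + 1`. This factor makes the coefficients of the expansion at `s = 0` alternately symmetric and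
antisymmetric. -/
noncomputable def symmDenominator (r : A → ℝ) (s : ℝ) : Matrix V V ℝ :=
  (Real.exp s - Real.exp (-s)) • 1 + weightMatrix h t (fun a => Real.exp (s * r a))
    - weightMatrix t h (fun a => Real.exp (s * -r a))

theorem hasExpansion_weightMatrix_exp (m : ℕ) (x : A → ℝ) :
    HasExpansion m (fun s => weightMatrix t h fun a => Real.exp (s * x a))
      (fun k => (k.factorial : ℝ)⁻¹ • weightMatrix t h (x ^ k)) := by
  simp only [← map_smul]
  exact (hasExpansion_pi fun a => hasExpansion_exp m (x a)).map _
    (LinearMap.continuous_of_finiteDimensional _)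

theorem hasExpansion_symmDenominator (m : ℕ) (r : A → ℝ) :
    HasExpansion m (symmDenominator t h r) (denominatorCoeff t h r) := by
  have hscalar := ((hasExpansion_exp m 1).sub (hasExpansion_exp m (-1))).map
    (LinearMap.toSpanSingleton ℝ (Matrix V V ℝ) 1) (by fun_prop)
  convert (hscalar.add (hasExpansion_weightMatrix_exp h t m r)).sub
    (hasExpansion_weightMatrix_exp t h m (-r)) using 1
  · funext s
    simp [symmDenominator]
  · funext k
    simp [denominatorCoeff, smul_add, smul_sub, smul_smul, mul_sub]

variable {t h} {R : A → ℝ} {D : ℝ → Matrix V V ℝ}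

theorem eq_exp_smul_symmDenominator
    (hD : ∀ (s : ℝ) (v w : V), D s v w =
      (if v = w then (1 : ℝ) else 0) * (1 - Real.exp (-2 * s))
      - (∑ a : A, if t a = v ∧ h a = w then Real.exp (-(s * R a)) else 0)
      + ∑ a : A, if t a = w ∧ h a = v then Real.exp (-(s * (2 - R a))) else 0) (s : ℝ) :
    D s = Real.exp (-s) • symmDenominator t h (fun a => R a - 1) s := by
  have hdiag : Real.exp (-s) * (Real.exp s - Real.exp (-s)) = 1 - Real.exp (-2 * s) := by
    rw [mul_sub, ← Real.exp_add, ← Real.exp_add, neg_add_cancel, Real.exp_zero, neg_mul, two_mul,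
      neg_add]
  have hout (a : A) : Real.exp (-s) * Real.exp (s * -(R a - 1)) = Real.exp (-(s * R a)) := by
    rw [← Real.exp_add]; ring_nf
  have hin (a : A) : Real.exp (-s) * Real.exp (s * (R a - 1)) = Real.exp (-(s * (2 - R a))) := by
    rw [← Real.exp_add]; ring_nf
  ext v w
  simp only [hD, symmDenominator, Matrix.smul_apply, Matrix.sub_apply, Matrix.add_apply,
    weightMatrix_apply, one_apply, smul_eq_mul, mul_sub (Real.exp (-s)) (_ + _), mul_add, mul_sum,
    mul_ite, mul_zero, mul_one, ite_mul, one_mul, zero_mul, hdiag, hout, hin,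
    and_comm (a := h _ = v)]
  ring

theorem hasInverseGraphLimit_denominator [Fintype V] {n : V → ℝ}
    (hC : IsCubicDegeneration (denominatorCoeff t h fun a => R a - 1) n)
    (hD : ∀ (s : ℝ) (v w : V), D s v w =
      (if v = w then (1 : ℝ) else 0) * (1 - Real.exp (-2 * s))
      - (∑ a : A, if t a = v ∧ h a = w then Real.exp (-(s * R a)) else 0)
      + ∑ a : A, if t a = w ∧ h a = v then Real.exp (-(s * (2 - R a))) else 0) :
    HasInverseGraphLimit (𝓝[≠] 0) (fun s => (s ^ 3)⁻¹ • D s)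
      ((1 / 3 * ((∑ v, n v ^ 2) + ∑ a, n (t a) * n (h a) * (R a - 1) ^ 3))⁻¹ • vecMulVec n n) := by
  have hscale : Tendsto (fun s : ℝ => Real.exp (-s)) (𝓝[≠] 0) (𝓝 1) := by
    have hcont : Continuous fun s : ℝ => Real.exp (-s) := by fun_prop
    simpa using (hcont.tendsto 0).mono_left nhdsWithin_le_nhds
  have hlimit := (hC.hasInverseGraphLimit (hasExpansion_symmDenominator t h 3 _)).smul hscale
    one_ne_zero
  rw [dotProduct_denominatorCoeff_three_mulVec, inv_one, one_smul] at hlimit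
  simpa only [eq_exp_smul_symmDenominator hD, smul_comm (Real.exp _)] using hlimit

end Denominator

end QuiverHilbert

open QuiverHilbert in
theorem a_maximization_eq_volume_minimization_general
    {V A : Type*} [Fintype V] [Fintype A] [DecidableEq V]
    (h t : A → V) (n : V → ℝ) (hn : ∀ v, n v ≠ 0) (R : A → ℝ)
    (anom : ∀ v, ∑ a, (if h a = v then n (t a) else 0) = ∑ a, if t a = v then n (h a) else 0)
    (nsvz : ∀ v, 2 * n v + (∑ a, if t a = v then (R a - 1) * n (h a) else 0)
      + (∑ a, if h a = v then (R a - 1) * n (t a) else 0) = 0)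
    (hTrRRB : ∀ q, IsBaryonicCharge t h n q →
      ∑ a, n (t a) * n (h a) * (R a - 1) ^ 2 * (q (h a) - q (t a)) = 0)
    (hTrRBB : ∀ q, IsBaryonicCharge t h n q → (¬ ∀ v w : V, q v = q w) →
      ∑ a, n (t a) * n (h a) * (R a - 1) * (q (h a) - q (t a)) ^ 2 ≠ 0)
    (lam : ℝ)
    (hlam : lam = 1 / 3 * ((∑ v, n v ^ 2) + ∑ a, n (t a) * n (h a) * (R a - 1) ^ 3))
    (hlam0 : lam ≠ 0)
    (aCharge : ℝ)
    (haCharge : aCharge =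
      9 / 32 * ((∑ v, n v ^ 2) + ∑ a, n (t a) * n (h a) * (R a - 1) ^ 3))
    (D : ℝ → Matrix V V ℝ)
    (hD : ∀ (s : ℝ) (v w : V), D s v w =
      (if v = w then (1 : ℝ) else 0) * (1 - Real.exp (-2 * s))
      - (∑ a : A, if t a = v ∧ h a = w then Real.exp (-(s * R a)) else 0)
      + ∑ a : A, if t a = w ∧ h a = v then Real.exp (-(s * (2 - R a))) else 0) :
    ∃ ε > (0 : ℝ), (∀ s : ℝ, s ≠ 0 → |s| < ε → IsUnit (D s)) ∧ ∀ v w : V,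
      Tendsto (fun s : ℝ => s ^ 3 * (D s)⁻¹ v w) (𝓝[≠] 0) (𝓝 (n v * n w / lam))
        ∧ n v * n w / lam = 27 / 32 * (n v * n w) / aCharge := by
  have hlimit := hasInverseGraphLimit_denominator
    (isCubicDegeneration_denominatorCoeff hn anom nsvz hTrRRB hTrRBB (hlam ▸ hlam0)) hD
  have hcube : ∀ᶠ s : ℝ in 𝓝[≠] 0, s ^ 3 ≠ 0 :=
    eventually_mem_nhdsWithin.mono fun s hs => pow_ne_zero 3 hs
  have ha : aCharge = 27 / 32 * lam := by rw [haCharge, hlam]; ring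
  obtain ⟨ε, hε, hunit⟩ := Metric.eventually_nhds_iff.1
    (eventually_nhdsWithin_iff.1 (hlimit.eventually_isUnit_of_inv_smul hcube))
  refine ⟨ε, hε, fun s hs hsε => hunit (by simpa using hsε) hs, fun v w => ⟨?_, ?_⟩⟩
  · convert hlimit.tendsto_mul_inv_apply hcube v w using 2
    rw [Matrix.smul_apply, vecMulVec_apply, smul_eq_mul, ← hlam, div_eq_inv_mul]
  · rw [ha, mul_div_mul_left _ _ (by norm_num)]

/-- Equivalence of a-maximization and volume minimization: for a
superconformal quiver (gauge anomaly, NSVZ, vanishing baryonic anomalies,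
negative-definite `Tr R B B` anomaly, positive `λ`), the denominator matrix
`D_Q(s)` is invertible for small `s > 0` and
`lim_{s→0⁺} s³ (D_Q(s)⁻¹)_{vw} = n_v n_w / λ = (27/32) n_v n_w / a`, where `a`
is the a-central charge. -/
theorem a_maximization_eq_volume_minimization
    {V A : Type*} [Fintype V] [Fintype A] [DecidableEq V]
    (h t : A → V) (n : V → ℕ) (hn : ∀ v, 0 < n v)
    (R : A → ℝ) (hR : ∀ a, 0 < R a ∧ R a < 2)
    (anom : ∀ v : V, ∑ a : A, (if h a = v then (n (t a) : ℝ) else 0)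
      = ∑ a : A, (if t a = v then (n (h a) : ℝ) else 0))
    (nsvz : ∀ v : V, 2 * (n v : ℝ)
      + (∑ a : A, if t a = v then (R a - 1) * (n (h a) : ℝ) else 0)
      + (∑ a : A, if h a = v then (R a - 1) * (n (t a) : ℝ) else 0) = 0)
    (hTrB : ∀ q : V → ℝ,
      (∀ v : V, ∑ a : A, (if h a = v then (n (t a) : ℝ) * q (t a) else 0)
        = ∑ a : A, (if t a = v then (n (h a) : ℝ) * q (h a) else 0)) →
      (∑ a : A, (n (t a) : ℝ) * (n (h a) : ℝ) * (q (h a) - q (t a)) = 0)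
      ∧ ∑ a : A, (n (t a) : ℝ) * (n (h a) : ℝ) * (R a - 1) ^ 2 * (q (h a) - q (t a)) = 0)
    (hTrRBB : ∀ q : V → ℝ,
      (∀ v : V, ∑ a : A, (if h a = v then (n (t a) : ℝ) * q (t a) else 0)
        = ∑ a : A, (if t a = v then (n (h a) : ℝ) * q (h a) else 0)) →
      (¬ ∀ v w : V, q v = q w) →
      ∑ a : A, (n (t a) : ℝ) * (n (h a) : ℝ) * (R a - 1) * (q (h a) - q (t a)) ^ 2 < 0)
    (lam : ℝ)
    (hlam : lam = (1 / 3) * ((∑ v : V, (n v : ℝ) ^ 2)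
      + ∑ a : A, (n (t a) : ℝ) * (n (h a) : ℝ) * (R a - 1) ^ 3))
    (hlampos : 0 < lam)
    (aCharge : ℝ)
    (haCharge : aCharge = (9 / 32) * ((∑ v : V, (n v : ℝ) ^ 2)
      + ∑ a : A, (n (t a) : ℝ) * (n (h a) : ℝ) * (R a - 1) ^ 3))
    (D : ℝ → Matrix V V ℝ)
    (hD : ∀ (s : ℝ) (v w : V), D s v w =
      (if v = w then (1 : ℝ) else 0) * (1 - Real.exp (-2 * s))
      - (∑ a : A, if t a = v ∧ h a = w then Real.exp (-(s * R a)) else 0)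
      + ∑ a : A, if t a = w ∧ h a = v then Real.exp (-(s * (2 - R a))) else 0) :
    ∃ ε > (0 : ℝ),
      (∀ s : ℝ, 0 < s → s < ε → IsUnit (D s))
      ∧ ∀ v w : V,
          Tendsto (fun s : ℝ => s ^ 3 * (D s)⁻¹ v w) (nhdsWithin 0 (Set.Ioi 0))
            (nhds ((n v : ℝ) * (n w : ℝ) / lam))
          ∧ (n v : ℝ) * (n w : ℝ) / lam = (27 / 32) * ((n v : ℝ) * (n w : ℝ)) / aCharge := by
  obtain ⟨ε, hε, hunit, hlim⟩ := a_maximization_eq_volume_minimization_general h t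
    (fun v => (n v : ℝ)) (fun v => Nat.cast_ne_zero.2 (hn v).ne') R anom nsvz
    (fun q hq => (hTrB q hq).2) (fun q hq hq' => (hTrRBB q hq hq').ne) lam hlam hlampos.ne'
    aCharge haCharge D hD
  exact ⟨ε, hε, fun s hs hsε => hunit s hs.ne' (by rwa [abs_of_pos hs]),
    fun v w => ⟨(hlim v w).1.mono_left (nhdsGT_le_nhdsNE 0), (hlim v w).2⟩⟩
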